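/- arXiv:1905.09076 — 4 statements merged into one kernel-verified Lean document; each statement's English description precedes it below -/
import Mathlib

section
/- Suppose σ : ℝ → ℝ is globally Lipschitz with Lipschitz constant L_σ and σ(0) = 0, let 0 < T < ∞, and let a, b be measurable with ∫₀^T ‖a(·,t)‖_{L²(Y)} dt < ∞ and ∫₀^T ‖b(·,·,t)‖_{L²(Y×Y)} dt < ∞. If f₁, f₂ : [0,T] → L²(Y) are two continuous curves each satisfying the integral equation fᵢ(t) = fᵢ(0) + ∫₀^t σ( a(·,s) − ∫_Y b(·,z,s) fᵢ(s)(z) dz ) ds on [0,T], then for all t ∈ [0,T]: ‖f₁(t) − f₂(t)‖_{L²(Y)} ≤ exp( L_σ ∫₀^t ‖b(·,·,s)‖_{L²(Y×Y)} ds ) · ‖f₁(0) − f₂(0)‖_{L²(Y)}. In particular, if f₁(0) = f₂(0) then f₁(t) = f₂(t) for all t ∈ [0,T]. -/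
open MeasureTheory Filter Set

noncomputable section

/-- The restriction of Lebesgue measure on `ℝⁿ` to a measurable set `Y`. -/
abbrev μY {n : ℕ} (Y : Set (Fin n → ℝ)) : Measure (Fin n → ℝ) := volume.restrict Y

/-- The Grönwall inequality for a continuous function and a merely integrable rate `k`. -/
lemma gronwall_of_integrable {T : ℝ} {u k : ℝ → ℝ} (hu : ContinuousOn u (Icc 0 T))
    (hu0 : ∀ t, 0 ≤ u t) (hk : IntegrableOn k (Icc 0 T)) (hk0 : ∀ t, 0 ≤ k t)
    (h : ∀ s t, 0 ≤ s → s ≤ t → t ≤ T → u t ≤ u s + ∫ r in s..t, k r * u r)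
    {t : ℝ} (ht : t ∈ Icc 0 T) :
    u t ≤ Real.exp (∫ r in (0 : ℝ)..t, k r) * u 0 := by
  have hT : 0 ≤ T := ht.1.trans ht.2
  set K : ℝ → ℝ := fun t => ∫ r in (0 : ℝ)..t, k r with hK
  have hKc : ContinuousOn K (Icc 0 T) := by
    have := intervalIntegral.continuousOn_primitive_interval (a := 0) (b := T) (μ := volume)
      (f := k) (by rwa [uIcc_of_le hT])
    rwa [uIcc_of_le hT] at this
  have hkI : ∀ s t, 0 ≤ s → s ≤ t → t ≤ T → IntervalIntegrable k volume s t := by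
    intro s t hs hst ht
    rw [intervalIntegrable_iff_integrableOn_Icc_of_le hst]
    exact hk.mono_set (Icc_subset_Icc hs ht)
  have hKsub : ∀ s t, 0 ≤ s → s ≤ t → t ≤ T → K t - K s = ∫ r in s..t, k r := by
    intro s t hs hst ht
    exact intervalIntegral.integral_interval_sub_left (hkI 0 t le_rfl (hs.trans hst) ht)
      (hkI 0 s le_rfl hs (hst.trans ht))
  have key : ∀ C : ℝ, 1 < C → ∀ t ∈ Icc 0 T, u t ≤ Real.exp (C * K t) * u 0 := by
    intro C hC
    have hmain : Icc 0 T ⊆ {t | u t ≤ Real.exp (C * K t) * u 0} := by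
      apply IsClosed.Icc_subset_of_forall_exists_gt
      · have := ContinuousOn.preimage_isClosed_of_isClosed
          (f := fun t => Real.exp (C * K t) * u 0 - u t) (s := Icc 0 T) (t := Ici 0)
          (by fun_prop) isClosed_Icc isClosed_Ici
        convert this using 1
        ext t
        simp [and_comm]
      · simp [hK]
      · rintro x ⟨hxS, hx⟩ y hy
        rw [mem_ofPred_eq] at hxS
        have hC0 : 0 < (C - 1) / C := div_pos (by linarith) (by linarith)
        have hev : ∀ᶠ z in nhdsWithin x (Ioi x), K z < K x + (C - 1) / C := by
          have h1 : ContinuousWithinAt K (Ioi x) x :=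
            (hKc x ⟨hx.1, hx.2.le⟩).mono_of_mem_nhdsWithin
              (mem_of_superset (Ioc_mem_nhdsGT hx.2)
                (fun z hz => ⟨hx.1.trans hz.1.le, hz.2⟩))
          exact h1.eventually (gt_mem_nhds (by linarith))
        obtain ⟨z, ⟨hz1, hzy⟩, hzT⟩ := ((hev.and (Ioc_mem_nhdsGT hy)).and
          (Ioc_mem_nhdsGT hx.2)).exists
        refine ⟨z, ?_, hzy⟩
        have hxz : x ≤ z := hzy.1.le
        obtain ⟨m, hm, hmax⟩ := isCompact_Icc.exists_isMaxOn (nonempty_Icc.2 hxz)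
          (hu.mono (Icc_subset_Icc hx.1 hzT.2))
        have hmT := hm.2.trans hzT.2
        have h1 : ∫ r in x..m, k r * u r ≤ ∫ r in x..m, k r * u m := by
          have hi := hkI x m hx.1 hm.1 hmT
          apply intervalIntegral.integral_mono_on hm.1
          · apply hi.mul_continuousOn
            rw [uIcc_of_le hm.1]
            exact hu.mono (Icc_subset_Icc hx.1 hmT)
          · exact hi.mul_const _
          · intro r hr
            exact mul_le_mul_of_nonneg_left (hmax ⟨hr.1, hr.2.trans hm.2⟩) (hk0 r)
        rw [intervalIntegral.integral_mul_const, ← hKsub x m hx.1 hm.1 hmT] at h1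
        have h2 : K m ≤ K z := by
          have := hKsub m z (hx.1.trans hm.1) hm.2 hzT.2
          have h3 : 0 ≤ ∫ r in m..z, k r :=
            intervalIntegral.integral_nonneg hm.2 (fun r _ => hk0 r)
          linarith
        have h2' : K x ≤ K z := by
          have := hKsub x z hx.1 hxz hzT.2
          have h3 : 0 ≤ ∫ r in x..z, k r :=
            intervalIntegral.integral_nonneg hxz (fun r _ => hk0 r)
          linarith
        have h4 := h x m hx.1 hm.1 hmT
        set δ := K z - K x with hδ
        have hδ0 : 0 ≤ δ := by linarith
        have hδC : C * δ ≤ C - 1 := by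
          have : δ ≤ (C - 1) / C := by linarith
          rwa [le_div_iff₀ (by linarith), mul_comm] at this
        have hδ1 : δ < 1 := by nlinarith
        have h5 : u m * (1 - δ) ≤ u x := by nlinarith [hu0 m]
        have h6 : 1 + C * δ ≤ Real.exp (C * δ) := by
          linarith [Real.add_one_le_exp (C * δ)]
        have h7 : 1 ≤ (1 - δ) * Real.exp (C * δ) := by nlinarith
        have h8 : u m ≤ u x * Real.exp (C * δ) := by
          calc u m ≤ u m * ((1 - δ) * Real.exp (C * δ)) := le_mul_of_one_le_right (hu0 m) h7
            _ = u m * (1 - δ) * Real.exp (C * δ) := by ring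
            _ ≤ _ := by gcongr
        have h9 : u z ≤ u m := hmax ⟨hxz, le_rfl⟩
        calc u z ≤ u x * Real.exp (C * δ) := h9.trans h8
          _ ≤ Real.exp (C * K x) * u 0 * Real.exp (C * δ) := by gcongr
          _ = Real.exp (C * K z) * u 0 := by
            rw [mul_right_comm, ← Real.exp_add]; congr 2; rw [hδ]; ring
    exact hmain
  have hlim : Tendsto (fun C : ℝ => Real.exp (C * K t) * u 0) (nhdsWithin 1 (Ioi 1))
      (nhds (Real.exp (1 * K t) * u 0)) :=
    (Continuous.tendsto (by fun_prop) 1).mono_left nhdsWithin_le_nhds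
  rw [one_mul] at hlim
  exact ge_of_tendsto hlim (eventually_mem_nhdsWithin.mono fun C hC => key C hC t ht)

section Kernel

variable {S X : Type*} [MeasurableSpace S] [MeasurableSpace X] {μ : Measure X} [SFinite μ]

lemma eLpNorm_two_sq {f : X → ℝ} (ν : Measure X) :
    eLpNorm f 2 ν ^ 2 = ∫⁻ x, ‖f x‖ₑ ^ 2 ∂ν := by
  have := eLpNorm_nnreal_pow_eq_lintegral (f := f) (μ := ν) (p := 2) two_ne_zero
  simpa using this

lemma measurable_eLpNorm_two {h : S → X → ℝ} (hh : Measurable (Function.uncurry h)) :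
    Measurable fun s => eLpNorm (h s) 2 μ := by
  simp_rw [eLpNorm_eq_lintegral_rpow_enorm_toReal two_ne_zero ENNReal.ofNat_ne_top]
  refine Measurable.pow_const ?_ _
  exact Measurable.lintegral_prod_right' (f := fun p : S × X => ‖h p.1 p.2‖ₑ ^ (2 : ENNReal).toReal)
    (hh.enorm.pow_const _)

lemma stronglyMeasurable_Lp_of_ae_eq [SecondCountableTopology (Lp ℝ 2 μ)] {h : S → X → ℝ}
    (hh : Measurable (Function.uncurry h)) {G : S → Lp ℝ 2 μ} (hG : ∀ s, G s =ᵐ[μ] h s) :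
    StronglyMeasurable G := by
  borelize ↥(Lp ℝ 2 μ)
  apply Measurable.stronglyMeasurable
  have hbasis : TopologicalSpace.IsTopologicalBasis
      {U : Set (Lp ℝ 2 μ) | ∃ g r, U = Metric.ball g r} := by
    apply TopologicalSpace.isTopologicalBasis_of_isOpen_of_nhds
    · rintro _ ⟨g, r, rfl⟩
      exact Metric.isOpen_ball
    · intro g U hg hU
      obtain ⟨r, hr, hrU⟩ := Metric.isOpen_iff.1 hU g hg
      exact ⟨_, ⟨g, r, rfl⟩, Metric.mem_ball_self hr, hrU⟩
  refine Measurable.mono (measurable_generateFrom ?_) le_rfl hbasis.borel_eq_generateFrom.le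
  rintro _ ⟨g, r, rfl⟩
  have hdist : ∀ s, dist (G s) g = (eLpNorm (fun y => h s y - g y) 2 μ).toReal := by
    intro s
    rw [Lp.dist_def]
    congr 1
    apply eLpNorm_congr_ae
    filter_upwards [hG s] with y hy
    simp [hy]
  have hmeas : Measurable fun s => dist (G s) g := by
    simp_rw [hdist]
    refine (measurable_eLpNorm_two (h := fun s y => h s y - g y) ?_).ennreal_toReal
    exact hh.sub ((Lp.stronglyMeasurable g).measurable.comp measurable_snd)
  exact hmeas measurableSet_Iio

/-- The Hilbert–Schmidt bound for integral operators. -/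
lemma eLpNorm_integral_mul_le {k : X → X → ℝ} (hk : Measurable (Function.uncurry k))
    {v : X → ℝ} (hv : AEStronglyMeasurable v μ) :
    eLpNorm (fun y => ∫ z, k y z * v z ∂μ) 2 μ ≤
      eLpNorm (fun q : X × X => k q.1 q.2) 2 (μ.prod μ) * eLpNorm v 2 μ := by
  have hky : ∀ y, Measurable (k y) := fun y => hk.comp measurable_prodMk_left
  have hpt : ∀ y, ‖∫ z, k y z * v z ∂μ‖ₑ ≤ eLpNorm (k y) 2 μ * eLpNorm v 2 μ := by
    intro y
    calc ‖∫ z, k y z * v z ∂μ‖ₑ ≤ ∫⁻ z, ‖k y z * v z‖ₑ ∂μ := enorm_integral_le_lintegral_enorm _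
      _ = eLpNorm (k y • v) 1 μ := by simp [eLpNorm_one_eq_lintegral_enorm]
      _ ≤ _ := eLpNorm_smul_le_mul_eLpNorm hv (hky y).aestronglyMeasurable
  rw [← ENNReal.pow_le_pow_left_iff two_ne_zero, mul_pow, eLpNorm_two_sq, eLpNorm_two_sq,
    lintegral_prod _ (by exact (hk.enorm.pow_const 2).aemeasurable)]
  calc ∫⁻ y, ‖∫ z, k y z * v z ∂μ‖ₑ ^ 2 ∂μ
      ≤ ∫⁻ y, (∫⁻ z, ‖k y z‖ₑ ^ 2 ∂μ) * eLpNorm v 2 μ ^ 2 ∂μ := by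
        apply lintegral_mono
        intro y
        beta_reduce
        rw [← eLpNorm_two_sq, ← mul_pow]
        exact pow_le_pow_left' (hpt y) 2
    _ = _ := by
        rw [lintegral_mul_const]
        exact Measurable.lintegral_prod_right' (f := fun p : X × X => ‖k p.1 p.2‖ₑ ^ 2)
          (hk.enorm.pow_const 2)

lemma ae_integral_mul_sub {k : X → X → ℝ} (hk : Measurable (Function.uncurry k))
    (hk2 : eLpNorm (fun q : X × X => k q.1 q.2) 2 (μ.prod μ) < ⊤)
    {v w : X → ℝ} (hv : MemLp v 2 μ) (hw : MemLp w 2 μ) :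
    ∀ᵐ y ∂μ, ∫ z, k y z * (v z - w z) ∂μ = ∫ z, k y z * v z ∂μ - ∫ z, k y z * w z ∂μ := by
  have hfin : ∫⁻ y, ∫⁻ z, ‖k y z‖ₑ ^ 2 ∂μ ∂μ ≠ ⊤ := by
    rw [← lintegral_prod (fun q : X × X => ‖k q.1 q.2‖ₑ ^ 2)
      (by exact (hk.enorm.pow_const 2).aemeasurable),
      ← eLpNorm_two_sq (f := fun q : X × X => k q.1 q.2)]
    exact ENNReal.pow_ne_top hk2.ne
  have hae := ae_lt_top (Measurable.lintegral_prod_right' (f := fun p : X × X => ‖k p.1 p.2‖ₑ ^ 2)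
          (hk.enorm.pow_const 2)) hfin
  filter_upwards [hae] with y hy
  have hky : MemLp (k y) 2 μ := by
    refine ⟨(hk.comp measurable_prodMk_left).aestronglyMeasurable, ?_⟩
    rw [← eLpNorm_two_sq] at hy
    by_contra hcon
    simp [not_lt_top_iff.1 hcon] at hy
  simp_rw [mul_sub]
  exact integral_sub (hky.integrable_mul hv) (hky.integrable_mul hw)

lemma measurable_integral_mul {k : S → X → ℝ} (hk : Measurable (Function.uncurry k))
    {v : X → ℝ} (hv : StronglyMeasurable v) : Measurable fun y => ∫ z, k y z * v z ∂μ := by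
  refine (StronglyMeasurable.integral_prod_right (f := fun y z => k y z * v z) ?_).measurable
  exact (hk.mul (hv.measurable.comp measurable_snd)).stronglyMeasurable

variable {σ : ℝ → ℝ} {L : NNReal}

/-- The layer `σ (α - B_k v)`, evaluated pointwise. -/
def layer (σ : ℝ → ℝ) (μ : Measure X) (α : X → ℝ) (k : X → X → ℝ) (v : X → ℝ) (y : X) : ℝ :=
  σ (α y - ∫ z, k y z * v z ∂μ)

lemma memLp_layer (hσ : LipschitzWith L σ) (hσ0 : σ 0 = 0) {α : X → ℝ} (hα : MemLp α 2 μ)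
    {k : X → X → ℝ} (hk : Measurable (Function.uncurry k))
    (hk2 : eLpNorm (fun q : X × X => k q.1 q.2) 2 (μ.prod μ) < ⊤) (v : Lp ℝ 2 μ) :
    MemLp (layer σ μ α k v) 2 μ := by
  have hB : MemLp (fun y => ∫ z, k y z * v z ∂μ) 2 μ :=
    ⟨(measurable_integral_mul hk (Lp.stronglyMeasurable v)).aestronglyMeasurable,
      (eLpNorm_integral_mul_le hk (Lp.aestronglyMeasurable v)).trans_lt
        (ENNReal.mul_lt_top hk2 (Lp.eLpNorm_lt_top v))⟩
  exact hσ.comp_memLp hσ0 (hα.sub hB)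

lemma eLpNorm_layer_le (hσ : LipschitzWith L σ) (hσ0 : σ 0 = 0) {α : X → ℝ} (hα : Measurable α)
    {k : X → X → ℝ} (hk : Measurable (Function.uncurry k)) (v : Lp ℝ 2 μ) :
    eLpNorm (layer σ μ α k v) 2 μ ≤ L * (eLpNorm α 2 μ +
      eLpNorm (fun q : X × X => k q.1 q.2) 2 (μ.prod μ) * eLpNorm v 2 μ) := by
  have h1 : eLpNorm (layer σ μ α k v) 2 μ ≤
      L • eLpNorm (α - fun y => ∫ z, k y z * v z ∂μ) 2 μ := by
    apply eLpNorm_le_nnreal_smul_eLpNorm_of_ae_le_mul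
    filter_upwards with y
    have := hσ.norm_sub_le (α y - ∫ z, k y z * v z ∂μ) 0
    rw [hσ0, sub_zero, sub_zero] at this
    exact this
  refine h1.trans ?_
  rw [ENNReal.smul_def, smul_eq_mul]
  gcongr
  refine (eLpNorm_sub_le hα.aestronglyMeasurable
    (measurable_integral_mul hk (Lp.stronglyMeasurable v)).aestronglyMeasurable
    one_le_two).trans ?_
  gcongr
  exact eLpNorm_integral_mul_le hk (Lp.aestronglyMeasurable v)

lemma eLpNorm_layer_sub_le (hσ : LipschitzWith L σ) (α : X → ℝ)
    {k : X → X → ℝ} (hk : Measurable (Function.uncurry k))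
    (hk2 : eLpNorm (fun q : X × X => k q.1 q.2) 2 (μ.prod μ) < ⊤) (v w : Lp ℝ 2 μ) :
    eLpNorm (layer σ μ α k v - layer σ μ α k w) 2 μ ≤ L *
      (eLpNorm (fun q : X × X => k q.1 q.2) 2 (μ.prod μ) * eLpNorm (v - w : Lp ℝ 2 μ) 2 μ) := by
  have h1 : eLpNorm (layer σ μ α k v - layer σ μ α k w) 2 μ ≤
      L • eLpNorm (fun y => ∫ z, k y z * (v z - w z) ∂μ) 2 μ := by
    apply eLpNorm_le_nnreal_smul_eLpNorm_of_ae_le_mul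
    filter_upwards [ae_integral_mul_sub hk hk2 (Lp.memLp v) (Lp.memLp w)] with y hy
    have := hσ.norm_sub_le (α y - ∫ z, k y z * v z ∂μ) (α y - ∫ z, k y z * w z ∂μ)
    rw [sub_sub_sub_cancel_left, norm_sub_rev (∫ z, k y z * w z ∂μ), ← hy] at this
    exact this
  refine h1.trans ?_
  rw [ENNReal.smul_def, smul_eq_mul, eLpNorm_congr_ae (Lp.coeFn_sub v w)]
  gcongr
  exact eLpNorm_integral_mul_le hk
    ((Lp.aestronglyMeasurable v).sub (Lp.aestronglyMeasurable w))

lemma norm_sub_le_of_ae_eq_layer (hσ : LipschitzWith L σ) (α : X → ℝ)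
    {k : X → X → ℝ} (hk : Measurable (Function.uncurry k))
    (hk2 : eLpNorm (fun q : X × X => k q.1 q.2) 2 (μ.prod μ) < ⊤) {v w V W : Lp ℝ 2 μ}
    (hV : V =ᵐ[μ] layer σ μ α k v) (hW : W =ᵐ[μ] layer σ μ α k w) :
    ‖V - W‖ ≤ L * (eLpNorm (fun q : X × X => k q.1 q.2) 2 (μ.prod μ)).toReal * ‖v - w‖ := by
  have h1 : eLpNorm (V - W : Lp ℝ 2 μ) 2 μ =
      eLpNorm (layer σ μ α k v - layer σ μ α k w) 2 μ :=
    eLpNorm_congr_ae ((Lp.coeFn_sub V W).trans (hV.sub hW))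
  rw [Lp.norm_def, Lp.norm_def, h1]
  have h2 := eLpNorm_layer_sub_le hσ α hk hk2 v w
  have h3 := ENNReal.toReal_mono (ENNReal.mul_ne_top ENNReal.coe_ne_top
    (ENNReal.mul_ne_top hk2.ne (Lp.eLpNorm_ne_top _))) h2
  simpa [mul_assoc] using h3

variable [SecondCountableTopology (Lp ℝ 2 μ)]

lemma integrableOn_of_ae_eq_layer (hσ : LipschitzWith L σ) (hσ0 : σ 0 = 0) {T : ℝ}
    {a : ℝ → X → ℝ} (ha : Measurable (Function.uncurry a))
    (ha_int : ∫⁻ t in Ioc (0:ℝ) T, eLpNorm (a t) 2 μ < ⊤)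
    {b : ℝ → X → X → ℝ} (hb : Measurable fun p : ℝ × (X × X) => b p.1 p.2.1 p.2.2)
    (hb_int : ∫⁻ t in Ioc (0:ℝ) T,
      eLpNorm (fun q : X × X => b t q.1 q.2) 2 (μ.prod μ) < ⊤)
    {f G : ℝ → Lp ℝ 2 μ} (hf : ContinuousOn f (Icc 0 T))
    (hG : ∀ s ∈ Icc (0:ℝ) T, G s =ᵐ[μ] layer σ μ (a s) (b s) (f s)) :
    IntegrableOn G (Ioc 0 T) := by
  have ham : Measurable fun s => eLpNorm (a s) 2 μ := measurable_eLpNorm_two ha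
  have hbm : Measurable fun s => eLpNorm (fun q : X × X => b s q.1 q.2) 2 (μ.prod μ) :=
    measurable_eLpNorm_two (h := fun s (q : X × X) => b s q.1 q.2) hb
  have has : ∀ s, Measurable (a s) := fun s => ha.comp measurable_prodMk_left
  have hbs : ∀ s, Measurable (Function.uncurry (b s)) := fun s => hb.comp measurable_prodMk_left
  set E : Set ℝ := {s | eLpNorm (a s) 2 μ < ⊤ ∧
    eLpNorm (fun q : X × X => b s q.1 q.2) 2 (μ.prod μ) < ⊤}
  have hEm : MeasurableSet E :=
    (measurableSet_lt ham measurable_const).inter (measurableSet_lt hbm measurable_const)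
  have hEae : ∀ᵐ s ∂volume.restrict (Ioc (0:ℝ) T), s ∈ E := by
    filter_upwards [ae_lt_top ham ha_int.ne, ae_lt_top hbm hb_int.ne] with s h1 h2
    exact ⟨h1, h2⟩
  have hmem : ∀ (v : Lp ℝ 2 μ) s, s ∈ E → MemLp (layer σ μ (a s) (b s) v) 2 μ := fun v s hs =>
    memLp_layer hσ hσ0 ⟨(has s).aestronglyMeasurable, hs.1⟩ (hbs s) hs.2 v
  classical
  let N : Lp ℝ 2 μ → ℝ → Lp ℝ 2 μ := fun v s =>
    if hs : s ∈ E then (hmem v s hs).toLp _ else 0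
  have hNE : ∀ v s, s ∈ E → N v s =ᵐ[μ] layer σ μ (a s) (b s) v := by
    intro v s hs
    simp only [N, dif_pos hs]
    exact MemLp.coeFn_toLp _
  have hN0 : ∀ v s, s ∉ E → N v s = 0 := fun v s hs => dif_neg hs
  have hNcont : ∀ s, Continuous fun v => N v s := by
    intro s
    by_cases hs : s ∈ E
    · refine (LipschitzWith.of_dist_le_mul (K := L *
        (eLpNorm (fun q : X × X => b s q.1 q.2) 2 (μ.prod μ)).toNNReal) fun v w => ?_).continuous
      rw [dist_eq_norm, dist_eq_norm]
      exact norm_sub_le_of_ae_eq_layer hσ (a s) (hbs s) hs.2 (hNE v s hs) (hNE w s hs)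
    · simp only [hN0 _ s hs]
      exact continuous_const
  have hNmeas : ∀ v, StronglyMeasurable (N v) := by
    intro v
    apply stronglyMeasurable_Lp_of_ae_eq
      (h := fun s y => if s ∈ E then layer σ μ (a s) (b s) v y else 0)
    · refine Measurable.ite (measurable_fst hEm) ?_ measurable_const
      refine hσ.continuous.measurable.comp (ha.sub ?_)
      refine measurable_integral_mul (k := fun (p : ℝ × X) z => b p.1 p.2 z) ?_
        (Lp.stronglyMeasurable v)
      exact hb.comp (f := fun p : (ℝ × X) × X => (p.1.1, (p.1.2, p.2))) (by fun_prop)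
    · intro s
      by_cases hs : s ∈ E
      · simpa [hs] using hNE v s hs
      · simp only [hs, if_false, hN0 v s hs]
        exact Lp.coeFn_zero _ _ _
  borelize ↥(Lp ℝ 2 μ)
  have hNunc : StronglyMeasurable (Function.uncurry N) :=
    stronglyMeasurable_uncurry_of_continuous_of_stronglyMeasurable hNcont hNmeas
  have hfm : AEMeasurable f (volume.restrict (Ioc 0 T)) :=
    ((hf.mono Ioc_subset_Icc_self).aestronglyMeasurable measurableSet_Ioc).aemeasurable
  have hcomp : AEStronglyMeasurable (fun s => N (f s) s) (volume.restrict (Ioc 0 T)) :=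
    (hNunc.measurable.comp_aemeasurable (hfm.prodMk aemeasurable_id)).aestronglyMeasurable
  have hGm : AEStronglyMeasurable G (volume.restrict (Ioc 0 T)) := by
    refine hcomp.congr ?_
    filter_upwards [hEae, ae_restrict_mem measurableSet_Ioc] with s hs hsT
    exact Lp.ext ((hNE (f s) s hs).trans (hG s (Ioc_subset_Icc_self hsT)).symm)
  obtain ⟨M, hM⟩ := isCompact_Icc.exists_bound_of_continuousOn hf
  refine ⟨hGm, ?_⟩
  rw [hasFiniteIntegral_iff_enorm]
  calc ∫⁻ s in Ioc 0 T, ‖G s‖ₑ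
      ≤ ∫⁻ s in Ioc 0 T, L * (eLpNorm (a s) 2 μ +
        eLpNorm (fun q : X × X => b s q.1 q.2) 2 (μ.prod μ) * ENNReal.ofReal M) := by
        refine setLIntegral_mono' measurableSet_Ioc fun s hs => ?_
        have hs' := Ioc_subset_Icc_self hs
        rw [Lp.enorm_def, eLpNorm_congr_ae (hG s hs')]
        refine (eLpNorm_layer_le hσ hσ0 (has s) (hbs s) (f s)).trans ?_
        gcongr
        rw [← Lp.enorm_def, ← ofReal_norm]
        exact ENNReal.ofReal_le_ofReal (hM s hs')
    _ = L * ((∫⁻ s in Ioc 0 T, eLpNorm (a s) 2 μ) + (∫⁻ s in Ioc 0 T,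
        eLpNorm (fun q : X × X => b s q.1 q.2) 2 (μ.prod μ)) * ENNReal.ofReal M) := by
        rw [lintegral_const_mul _ (by fun_prop), lintegral_add_left ham,
          lintegral_mul_const _ hbm]
    _ < ⊤ := ENNReal.mul_lt_top ENNReal.coe_lt_top (ENNReal.add_lt_top.2 ⟨ha_int,
        ENNReal.mul_lt_top hb_int ENNReal.ofReal_lt_top⟩)

end Kernel

/-- Stability and uniqueness for the forward propagation equation: two continuous
solutions of the integral equation satisfy
`‖f₁(t) - f₂(t)‖ ≤ exp(L_σ ∫₀^t ‖b(s)‖_{L²(Y×Y)} ds) ‖f₁(0) - f₂(0)‖`;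
in particular solutions with the same initial datum coincide. -/
theorem forward_stability {n : ℕ} (Y : Set (Fin n → ℝ)) (hY : MeasurableSet Y)
    (σ : ℝ → ℝ) (Lσ : NNReal) (hσ : LipschitzWith Lσ σ) (hσ0 : σ 0 = 0)
    (T : ℝ) (hT : 0 < T)
    (a : ℝ → (Fin n → ℝ) → ℝ)
    (ha_meas : Measurable (Function.uncurry a))
    (ha_int : ∫⁻ t in Ioc (0:ℝ) T, eLpNorm (a t) 2 (μY Y) < ⊤)
    (b : ℝ → (Fin n → ℝ) → (Fin n → ℝ) → ℝ)
    (hb_meas : Measurable fun p : ℝ × ((Fin n → ℝ) × (Fin n → ℝ)) => b p.1 p.2.1 p.2.2)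
    (hb_int : ∫⁻ t in Ioc (0:ℝ) T,
      eLpNorm (fun q : (Fin n → ℝ) × (Fin n → ℝ) => b t q.1 q.2) 2 ((μY Y).prod (μY Y)) < ⊤)
    (f₁ f₂ G₁ G₂ : ℝ → Lp ℝ 2 (μY Y))
    (hf₁cont : ContinuousOn f₁ (Icc 0 T)) (hf₂cont : ContinuousOn f₂ (Icc 0 T))
    (hG₁ : ∀ s ∈ Icc (0:ℝ) T,
      ⇑(G₁ s) =ᵐ[μY Y] fun y => σ (a s y - ∫ z, b s y z * f₁ s z ∂(μY Y)))
    (hG₂ : ∀ s ∈ Icc (0:ℝ) T,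
      ⇑(G₂ s) =ᵐ[μY Y] fun y => σ (a s y - ∫ z, b s y z * f₂ s z ∂(μY Y)))
    (hf₁ : ∀ t ∈ Icc (0:ℝ) T, f₁ t = f₁ 0 + ∫ s in Ioc (0:ℝ) t, G₁ s)
    (hf₂ : ∀ t ∈ Icc (0:ℝ) T, f₂ t = f₂ 0 + ∫ s in Ioc (0:ℝ) t, G₂ s) :
    (∀ t ∈ Icc (0:ℝ) T,
      ‖f₁ t - f₂ t‖ ≤
        Real.exp ((Lσ : ℝ) * ∫ s in Ioc (0:ℝ) t,
            (eLpNorm (fun q : (Fin n → ℝ) × (Fin n → ℝ) => b s q.1 q.2) 2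
              ((μY Y).prod (μY Y))).toReal) * ‖f₁ 0 - f₂ 0‖) ∧
    (f₁ 0 = f₂ 0 → ∀ t ∈ Icc (0:ℝ) T, f₁ t = f₂ t) := by
  have : Fact ((2 : ENNReal) ≠ ⊤) := ⟨ENNReal.ofNat_ne_top⟩
  have hG₁i := integrableOn_of_ae_eq_layer hσ hσ0 ha_meas ha_int hb_meas hb_int hf₁cont hG₁
  have hG₂i := integrableOn_of_ae_eq_layer hσ hσ0 ha_meas ha_int hb_meas hb_int hf₂cont hG₂
  set β : ℝ → ENNReal := fun s =>
    eLpNorm (fun q : (Fin n → ℝ) × (Fin n → ℝ) => b s q.1 q.2) 2 ((μY Y).prod (μY Y))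
  have hβm : Measurable β :=
    measurable_eLpNorm_two (h := fun s (q : (Fin n → ℝ) × (Fin n → ℝ)) => b s q.1 q.2) hb_meas
  have hβ_int : IntegrableOn (fun s => (β s).toReal) (Ioc 0 T) :=
    integrable_toReal_of_lintegral_ne_top hβm.aemeasurable hb_int.ne
  have hk_int : IntegrableOn (fun s => Lσ * (β s).toReal) (Icc 0 T) := by
    rw [integrableOn_Icc_iff_integrableOn_Ioc]
    exact hβ_int.const_mul _
  have hu : ContinuousOn (fun t => ‖f₁ t - f₂ t‖) (Icc 0 T) := (hf₁cont.sub hf₂cont).norm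
  have hstep : ∀ s t, 0 ≤ s → s ≤ t → t ≤ T →
      ‖f₁ t - f₂ t‖ ≤ ‖f₁ s - f₂ s‖ + ∫ r in s..t, Lσ * (β r).toReal * ‖f₁ r - f₂ r‖ := by
    intro s t hs hst ht
    have hsub : Ioc s t ⊆ Ioc 0 T := Ioc_subset_Ioc hs ht
    have hincr : ∀ f G : ℝ → Lp ℝ 2 (μY Y), IntegrableOn G (Ioc 0 T) →
        (∀ t ∈ Icc (0:ℝ) T, f t = f 0 + ∫ s in Ioc (0:ℝ) t, G s) →
        f t - f s = ∫ r in Ioc s t, G r := by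
      intro f G hG hf
      rw [hf t ⟨hs.trans hst, ht⟩, hf s ⟨hs, hst.trans ht⟩, add_sub_add_left_eq_sub,
        ← Ioc_union_Ioc_eq_Ioc hs hst, setIntegral_union (Ioc_disjoint_Ioc_of_le le_rfl)
          measurableSet_Ioc (hG.mono_set (Ioc_subset_Ioc_right (hst.trans ht)))
          (hG.mono_set hsub), add_sub_cancel_left]
    have heq : f₁ t - f₂ t = (f₁ s - f₂ s) + ∫ r in Ioc s t, (G₁ r - G₂ r) := by
      rw [integral_sub (hG₁i.mono_set hsub) (hG₂i.mono_set hsub), ← hincr f₁ G₁ hG₁i hf₁,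
        ← hincr f₂ G₂ hG₂i hf₂]
      abel
    rw [heq, intervalIntegral.integral_of_le hst]
    refine (norm_add_le _ _).trans (add_le_add_right (norm_integral_le_of_norm_le ?_ ?_) _)
    · exact ((hk_int.mul_continuousOn hu isCompact_Icc).mono_set Ioc_subset_Icc_self).mono_set hsub
    · filter_upwards [ae_restrict_mem measurableSet_Ioc,
        ae_restrict_of_ae_restrict_of_subset hsub (ae_lt_top hβm hb_int.ne)] with r hr hr2
      have hrT := Ioc_subset_Icc_self (hsub hr)
      exact norm_sub_le_of_ae_eq_layer hσ (a r) (k := b r) (hb_meas.comp measurable_prodMk_left) hr2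
        (hG₁ r hrT) (hG₂ r hrT)
  have hbound : ∀ t ∈ Icc (0:ℝ) T, ‖f₁ t - f₂ t‖ ≤
      Real.exp (Lσ * ∫ s in Ioc (0:ℝ) t, (β s).toReal) * ‖f₁ 0 - f₂ 0‖ := by
    intro t ht
    have := gronwall_of_integrable hu (fun t => norm_nonneg _) hk_int
      (fun t => by positivity) hstep ht
    rwa [intervalIntegral.integral_const_mul, intervalIntegral.integral_of_le ht.1] at this
  refine ⟨hbound, fun h0 t ht => ?_⟩
  have := hbound t ht
  rw [h0, sub_self, norm_zero, mul_zero] at this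
  exact sub_eq_zero.1 (norm_le_zero_iff.1 this)
end
end

section
/- Let B be a bounded self-adjoint operator on L²(Y), and let σ : ℝ → ℝ be globally Lipschitz with σ(0) = 0 and s·σ(s) ≥ 0 for all s ∈ ℝ. If u_e ∈ Range(B) and the function σ∘u_e belongs to the kernel of B, then u_e(y)·σ(u_e(y)) = 0 for almost every y ∈ Y. -/
open MeasureTheory Filter Set
open scoped RealInnerProductSpace

noncomputable section

/-- If `B` is bounded self-adjoint, `s σ(s) ≥ 0`, `u_e ∈ Range(B)` and
`σ ∘ u_e ∈ Ker(B)`, then `u_e σ(u_e) = 0` a.e. on `Y`. -/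
theorem equilibrium_sign_vanishes {n : ℕ} (Y : Set (Fin n → ℝ)) (hY : MeasurableSet Y)
    (σ : ℝ → ℝ) (K : NNReal) (hσ : LipschitzWith K σ) (hσ0 : σ 0 = 0)
    (hsign : ∀ s : ℝ, 0 ≤ s * σ s)
    (B : Lp ℝ 2 (μY Y) →L[ℝ] Lp ℝ 2 (μY Y))
    (hBsa : IsSelfAdjoint B)
    (ue : Lp ℝ 2 (μY Y)) (hue : ue ∈ Set.range B)
    (g : Lp ℝ 2 (μY Y)) (hg : ⇑g =ᵐ[μY Y] fun y => σ (ue y))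
    (hker : B g = 0) :
    ∀ᵐ y ∂(μY Y), ue y * σ (ue y) = 0 := by
  obtain ⟨v, rfl⟩ := hue
  have horth : ⟪B v, g⟫ = 0 := by
    rw [← ContinuousLinearMap.adjoint_inner_right, hBsa.adjoint_eq, hker, inner_zero_right]
  have hprod : (fun y => ⟪B v y, g y⟫) =ᵐ[μY Y] fun y => B v y * σ (B v y) := by
    filter_upwards [hg] with y hy
    simp [hy, mul_comm]
  have hint : Integrable (fun y => B v y * σ (B v y)) (μY Y) :=
    (L2.integrable_inner (𝕜 := ℝ) (B v) g).congr hprod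
  rw [L2.inner_def, integral_congr_ae hprod,
    integral_eq_zero_iff_of_nonneg (fun y => hsign (B v y)) hint] at horth
  exact horth
end
end

section
/- Let B be a compact self-adjoint operator on L²(Y) with ⟨B v, v⟩_{L²(Y)} > 0 for every nonzero v ∈ L²(Y) (so all eigenvalues of B are positive and 0 is not an eigenvalue), and let c > 0. Let w : [0,∞) → L²(Y) be a continuously differentiable curve with w'(t) = −c B w(t) and w(0) = w_I ∈ L²(Y). Then t ↦ ‖w(t)‖_{L²(Y)} is nonincreasing, and w(t) → 0 in L²(Y) as t → ∞. -/
open MeasureTheory Filter Set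
open scoped RealInnerProductSpace

noncomputable section

section GradientFlow

variable {E : Type*} [NormedAddCommGroup E] [InnerProductSpace ℝ E]
  {B : E →L[ℝ] E} {c : ℝ} {w : ℝ → E}

/-- The norm of a solution of `w' = -c B w` is nonincreasing when `B` is nonnegative. -/
theorem antitoneOn_norm_of_flow (hnonneg : ∀ v, 0 ≤ ⟪B v, v⟫) (hc : 0 ≤ c)
    (hderiv : ∀ t ∈ Ici (0:ℝ), HasDerivWithinAt w (-(c • B (w t))) (Ici 0) t) :
    AntitoneOn (fun t => ‖w t‖) (Ici 0) := by
  have hsq : AntitoneOn (fun t => ‖w t‖ ^ 2) (Ici 0) := by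
    refine antitoneOn_of_hasDerivWithinAt_nonpos (convex_Ici 0)
      (fun t ht => (hderiv t ht).norm_sq.continuousWithinAt)
      (fun t ht => (hderiv t (interior_subset ht)).norm_sq.mono interior_subset) ?_
    intro t _
    rw [inner_neg_right, inner_smul_right, real_inner_comm]
    linarith [mul_nonneg hc (hnonneg (w t))]
  intro s hs t ht hst
  exact le_of_sq_le_sq (hsq hs ht hst) (norm_nonneg _)

/-- If `w` solves `w' = -c B w`, then so does `B w`. -/
theorem hasDerivWithinAt_map_flow
    (hderiv : ∀ t ∈ Ici (0:ℝ), HasDerivWithinAt w (-(c • B (w t))) (Ici 0) t) :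
    ∀ t ∈ Ici (0:ℝ), HasDerivWithinAt (fun t => B (w t)) (-(c • B (B (w t)))) (Ici 0) t := by
  intro t ht
  exact (B.hasFDerivAt.comp_hasDerivWithinAt t (hderiv t ht)).congr_deriv (by simp)

/-- Along a solution of `w' = -c B w`, `‖B (w t)‖ ^ 2` decays like `1 / t`. -/
theorem mul_norm_map_flow_sq_le (hsymm : ∀ u v, ⟪B u, v⟫ = ⟪u, B v⟫)
    (hnonneg : ∀ v, 0 ≤ ⟪B v, v⟫)
    (hderiv : ∀ t ∈ Ici (0:ℝ), HasDerivWithinAt w (-(c • B (w t))) (Ici 0) t)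
    {t : ℝ} (ht : 0 ≤ t) : 2 * c * t * ‖B (w t)‖ ^ 2 ≤ ⟪B (w 0), w 0⟫ := by
  have hB := hasDerivWithinAt_map_flow hderiv
  have hG : ∀ s ∈ Ici (0:ℝ), HasDerivWithinAt
      (fun s => ⟪B (w s), w s⟫ + 2 * c * s * ‖B (w s)‖ ^ 2)
      (-(4 * c ^ 2 * s * ⟪B (B (w s)), B (w s)⟫)) (Ici 0) s := by
    intro s hs
    refine (((hB s hs).inner ℝ (hderiv s hs)).add
      (((hasDerivWithinAt_id s (Ici 0)).const_mul (2 * c)).mul (hB s hs).norm_sq)).congr_deriv ?_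
    simp only [inner_neg_right, inner_neg_left, inner_smul_right, inner_smul_left,
      real_inner_self_eq_norm_sq, hsymm (B (w s)) (w s), id, RCLike.conj_to_real,
      hsymm (B (w s)) (B (w s))]
    ring
  have hanti : AntitoneOn (fun s => ⟪B (w s), w s⟫ + 2 * c * s * ‖B (w s)‖ ^ 2) (Ici 0) := by
    refine antitoneOn_of_hasDerivWithinAt_nonpos (convex_Ici 0)
      (fun s hs => (hG s hs).continuousWithinAt)
      (fun s hs => (hG s (interior_subset hs)).mono interior_subset) ?_
    intro s hs
    have hs0 : 0 ≤ s := interior_subset hs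
    have := hnonneg (B (w s))
    exact neg_nonpos.mpr (by positivity)
  have h := hanti self_mem_Ici ht ht
  simp only [mul_zero, zero_mul, add_zero] at h
  linarith [hnonneg (w t)]

/-- For symmetric `B`, the inner product of two values of a solution depends only on the sum
of the times; in particular `‖w t‖ ^ 2` is the inner product of `w 0` and `w (2 * t)`. -/
theorem norm_flow_sq_eq_inner (hsymm : ∀ u v, ⟪B u, v⟫ = ⟪u, B v⟫)
    (hderiv : ∀ t ∈ Ici (0:ℝ), HasDerivWithinAt w (-(c • B (w t))) (Ici 0) t)
    {t : ℝ} (ht : 0 ≤ t) : ‖w t‖ ^ 2 = ⟪w 0, w (2 * t)⟫ := by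
  have hcont : ContinuousOn w (Ici 0) := fun s hs => (hderiv s hs).continuousWithinAt
  have hconst := constant_of_has_deriv_right_zero (a := 0) (b := t)
    (f := fun s => ⟪w (t - s), w (t + s)⟫) ?_ ?_ t ⟨ht, le_rfl⟩
  · simp only [sub_self, sub_zero, add_zero, real_inner_self_eq_norm_sq] at hconst
    rw [← hconst, two_mul]
  · refine ContinuousOn.inner ?_ ?_
    · exact hcont.comp (by fun_prop) fun s hs => sub_nonneg.mpr hs.2
    · exact hcont.comp (by fun_prop) fun s hs => add_nonneg ht hs.1
  · intro s hs
    have hsub : 0 < t - s := sub_pos.mpr hs.2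
    have hadd : 0 < t + s := by linarith [hs.1]
    have h₁ := ((hderiv _ hsub.le).hasDerivAt (Ici_mem_nhds hsub)).comp_const_sub t s
    have h₂ := ((hderiv _ hadd.le).hasDerivAt (Ici_mem_nhds hadd)).comp_const_add t s
    refine HasDerivAt.hasDerivWithinAt ?_
    refine (h₁.inner ℝ h₂).congr_deriv ?_
    simp [inner_smul_left, inner_smul_right, hsymm]

/-- Every solution of `w' = -c B w` tends to `0` if `B` is symmetric, nonnegative and has
dense range. -/
theorem tendsto_flow_zero (hsymm : ∀ u v, ⟪B u, v⟫ = ⟪u, B v⟫)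
    (hnonneg : ∀ v, 0 ≤ ⟪B v, v⟫) (hdense : DenseRange B) (hc : 0 < c)
    (hderiv : ∀ t ∈ Ici (0:ℝ), HasDerivWithinAt w (-(c • B (w t))) (Ici 0) t) :
    Tendsto w atTop (nhds 0) := by
  have hBsq : Tendsto (fun t => ‖B (w t)‖ ^ 2) atTop (nhds 0) := by
    have hlim : Tendsto (fun t : ℝ => ⟪B (w 0), w 0⟫ / (2 * c * t)) atTop (nhds 0) :=
      (tendsto_id.const_mul_atTop (by positivity)).const_div_atTop _
    refine squeeze_zero' (Eventually.of_forall fun t => by positivity) ?_ hlim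
    filter_upwards [eventually_gt_atTop 0] with t ht
    rw [le_div_iff₀ (by positivity), mul_comm]
    exact mul_norm_map_flow_sq_le hsymm hnonneg hderiv ht.le
  have hB : Tendsto (fun t => ‖B (w t)‖) atTop (nhds 0) := by
    simpa [Real.sqrt_sq] using hBsq.sqrt
  have hsq : Tendsto (fun t => ‖w t‖ ^ 2) atTop (nhds 0) := by
    refine Metric.tendsto_nhds.mpr fun ε hε => ?_
    obtain ⟨v, hv⟩ := hdense.exists_dist_lt (w 0)
      (show 0 < ε / (2 * (‖w 0‖ + 1)) by positivity)
    rw [dist_eq_norm, lt_div_iff₀ (by positivity)] at hv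
    have hlim : Tendsto (fun t : ℝ => ‖v‖ * ‖B (w (2 * t))‖) atTop (nhds 0) := by
      simpa using (hB.comp (tendsto_id.const_mul_atTop two_pos)).const_mul ‖v‖
    filter_upwards [hlim.eventually_lt_const (half_pos hε), eventually_ge_atTop 0] with t hlt ht
    rw [Real.dist_eq, sub_zero, abs_of_nonneg (by positivity),
      norm_flow_sq_eq_inner hsymm hderiv ht]
    have hle : ‖w (2 * t)‖ ≤ ‖w 0‖ :=
      antitoneOn_norm_of_flow hnonneg hc.le hderiv self_mem_Ici
        (show 0 ≤ 2 * t by positivity) (by positivity)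
    calc ⟪w 0, w (2 * t)⟫ = ⟪w 0 - B v, w (2 * t)⟫ + ⟪v, B (w (2 * t))⟫ := by
          rw [inner_sub_left, hsymm]; ring
      _ ≤ ‖w 0 - B v‖ * ‖w (2 * t)‖ + ‖v‖ * ‖B (w (2 * t))‖ :=
          add_le_add (real_inner_le_norm _ _) (real_inner_le_norm _ _)
      _ ≤ ‖w 0 - B v‖ * (‖w 0‖ + 1) + ‖v‖ * ‖B (w (2 * t))‖ := by
          gcongr
          linarith
      _ < ε := by linarith
  rw [tendsto_zero_iff_norm_tendsto_zero]
  simpa [Real.sqrt_sq] using hsq.sqrt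

/-- A strictly positive operator on a Hilbert space has dense range. -/
theorem denseRange_of_inner_pos [CompleteSpace E]
    (hpos : ∀ v, v ≠ 0 → 0 < ⟪B v, v⟫) : DenseRange B := by
  have htop : B.range.topologicalClosure = ⊤ := by
    rw [Submodule.topologicalClosure_eq_top_iff, Submodule.eq_bot_iff]
    intro v hv
    by_contra hne
    exact (hpos v hne).ne' (hv (B v) ⟨v, rfl⟩)
  exact Submodule.dense_iff_topologicalClosure_eq_top.mpr htop

end GradientFlow

/-- For a compact self-adjoint strictly positive operator `B` and `c > 0`, every
solution of the linearized equation `w' = -c B w` has nonincreasing norm and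
converges to `0` in `L²(Y)` as `t → ∞`. -/
theorem linearized_asymptotic_stability {n : ℕ} (Y : Set (Fin n → ℝ))
    (hY : MeasurableSet Y)
    (B : Lp ℝ 2 (μY Y) →L[ℝ] Lp ℝ 2 (μY Y))
    (hBcompact : IsCompactOperator B)
    (hBsa : IsSelfAdjoint B)
    (hBpos : ∀ v : Lp ℝ 2 (μY Y), v ≠ 0 → 0 < ⟪B v, v⟫)
    (c : ℝ) (hc : 0 < c)
    (wI : Lp ℝ 2 (μY Y))
    (w : ℝ → Lp ℝ 2 (μY Y))
    (hw0 : w 0 = wI)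
    (hderiv : ∀ t ∈ Ici (0:ℝ), HasDerivWithinAt w (-(c • B (w t))) (Ici 0) t) :
    AntitoneOn (fun t => ‖w t‖) (Ici 0) ∧ Tendsto w atTop (nhds 0) := by
  have hsymm : ∀ u v, ⟪B u, v⟫ = ⟪u, B v⟫ := hBsa.isSymmetric
  have hnonneg : ∀ v, 0 ≤ ⟪B v, v⟫ := fun v => by
    rcases eq_or_ne v 0 with rfl | hv
    · simp
    · exact (hBpos v hv).le
  exact ⟨antitoneOn_norm_of_flow hnonneg hc.le hderiv,
    tendsto_flow_zero hsymm hnonneg (denseRange_of_inner_pos hBpos) hc hderiv⟩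
end
end

section
/- Let σ : ℝ → ℝ be continuously differentiable with bounded derivative, σ(0) = 0, and σ'(s) > 0 for all s ∈ ℝ. Let 0 < T < ∞, let a, b be measurable with ∫₀^T ‖a(·,t)‖_{L²(Y)} dt < ∞ and ∫₀^T ‖b(·,·,t)‖_{L²(Y×Y)} dt < ∞, let f : [0,T] → L²(Y) be a continuous curve with f(t) = f_I + ∫₀^t σ(u(s)) ds where u(s) := a(·,s) − B_{b(s)} f(s), let f̃ ∈ L²(Y), and let r : [0,T] → L²(Y) be the continuous curve solving the backward co-state equation r(t) = (f(T) − f̃) − ∫_t^T B_{b(s)ᵀ}( σ'(u(s))·r(s) ) ds. Then the stationarity condition σ'(u(s))·r(s) = 0 in L²(Y) for every s ∈ [0,T] holds if and only if f(T) = f̃ in L²(Y); i.e., the cost gradient vanishes if and only if the target f̃ is exactly reached at time T. -/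
open MeasureTheory Filter Set

noncomputable section

/-- An integral operator with an `L²` kernel is bounded on `L²` by the norm of its kernel. -/
lemma eLpNorm_integral_kernel_mul_le {α : Type*} [MeasurableSpace α] {μ : Measure α} [SFinite μ]
    {b : α → α → ℝ} (hb : Measurable fun q : α × α => b q.1 q.2) {g v : α → ℝ}
    (hg : AEMeasurable g μ) {C : ENNReal} (hC : C ≠ ⊤) (hv : ∀ z, ‖v z‖ₑ ≤ C * ‖g z‖ₑ) :
    eLpNorm (fun y => ∫ z, b z y * v z ∂μ) 2 μ ≤
      C * eLpNorm (fun q : α × α => b q.1 q.2) 2 (μ.prod μ) * eLpNorm g 2 μ := by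
  have holder (y : α) : ‖∫ z, b z y * v z ∂μ‖ₑ ≤
      (∫⁻ z, ‖b z y‖ₑ ^ (2:ℝ) ∂μ) ^ (1/2:ℝ) * (C * eLpNorm g 2 μ) := by
    calc ‖∫ z, b z y * v z ∂μ‖ₑ ≤ ∫⁻ z, ‖b z y * v z‖ₑ ∂μ := enorm_integral_le_lintegral_enorm _
      _ ≤ ∫⁻ z, C * (‖b z y‖ₑ * ‖g z‖ₑ) ∂μ := by
          refine lintegral_mono fun z => ?_
          rw [enorm_mul, mul_left_comm]
          gcongr
          exact hv z
      _ = C * ∫⁻ z, ‖b z y‖ₑ * ‖g z‖ₑ ∂μ := lintegral_const_mul' _ _ hC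
      _ ≤ C * ((∫⁻ z, ‖b z y‖ₑ ^ (2:ℝ) ∂μ) ^ (1/2:ℝ) *
            (∫⁻ z, ‖g z‖ₑ ^ (2:ℝ) ∂μ) ^ (1/2:ℝ)) := by
          gcongr
          refine ENNReal.lintegral_mul_le_Lp_mul_Lq μ Real.HolderConjugate.two_two ?_ hg.enorm
          exact (hb.comp (measurable_id.prodMk measurable_const)).enorm.aemeasurable
      _ = _ := by
          rw [eLpNorm_eq_lintegral_rpow_enorm_toReal (by norm_num) (by norm_num),
            ENNReal.toReal_ofNat]
          ring
  have tonelli : ∫⁻ y, ∫⁻ z, ‖b z y‖ₑ ^ (2:ℝ) ∂μ ∂μ =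
      ∫⁻ q, ‖b q.1 q.2‖ₑ ^ (2:ℝ) ∂(μ.prod μ) :=
    (lintegral_prod_symm' (fun q : α × α => ‖b q.1 q.2‖ₑ ^ (2:ℝ)) (hb.enorm.pow_const _)).symm
  have inner_meas : Measurable fun y => ∫⁻ z, ‖b z y‖ₑ ^ (2:ℝ) ∂μ :=
    (hb.enorm.pow_const (2:ℝ)).lintegral_prod_left'
  calc eLpNorm (fun y => ∫ z, b z y * v z ∂μ) 2 μ
      = (∫⁻ y, ‖∫ z, b z y * v z ∂μ‖ₑ ^ (2:ℝ) ∂μ) ^ (1/2:ℝ) := by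
        rw [eLpNorm_eq_lintegral_rpow_enorm_toReal (by norm_num) (by norm_num),
          ENNReal.toReal_ofNat]
    _ ≤ (∫⁻ y, (∫⁻ z, ‖b z y‖ₑ ^ (2:ℝ) ∂μ) * (C * eLpNorm g 2 μ) ^ (2:ℝ) ∂μ) ^ (1/2:ℝ) := by
        gcongr with y
        calc _ ≤ ((∫⁻ z, ‖b z y‖ₑ ^ (2:ℝ) ∂μ) ^ (1/2:ℝ) * (C * eLpNorm g 2 μ)) ^ (2:ℝ) := by
              gcongr
              exact holder y
          _ = _ := by
              rw [ENNReal.mul_rpow_of_nonneg _ _ (by norm_num), ← ENNReal.rpow_mul]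
              norm_num
    _ = (∫⁻ q, ‖b q.1 q.2‖ₑ ^ (2:ℝ) ∂(μ.prod μ)) ^ (1/2:ℝ) * (C * eLpNorm g 2 μ) := by
        rw [lintegral_mul_const _ inner_meas, tonelli,
          ENNReal.mul_rpow_of_nonneg _ _ (by norm_num), ← ENNReal.rpow_mul _ (2:ℝ)]
        norm_num
    _ = _ := by
        rw [eLpNorm_eq_lintegral_rpow_enorm_toReal (f := fun q : α × α => b q.1 q.2)
          (by norm_num) (by norm_num), ENNReal.toReal_ofNat]
        ring

/-- Backward Grönwall uniqueness with an integrable weight: a continuous curve dominated by the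
weighted integral of its own norm up to the terminal time vanishes. -/
lemma eq_zero_of_enorm_le_lintegral_Ioc {E : Type*} [NormedAddCommGroup E] {T : ℝ} {r : ℝ → E}
    (hr : ContinuousOn r (Icc 0 T)) {k : ℝ → ENNReal} (hk : ∫⁻ t in Ioc (0:ℝ) T, k t ≠ ⊤)
    (h : ∀ t ∈ Icc (0:ℝ) T, ‖r t‖ₑ ≤ ∫⁻ s in Ioc t T, k s * ‖r s‖ₑ) :
    ∀ t ∈ Icc (0:ℝ) T, r t = 0 := by
  obtain ⟨δ, hδ, hδk⟩ := exists_pos_setLIntegral_lt_of_measure_lt hk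
    (ε := 1/2) (by norm_num)
  obtain ⟨d, hd, hdδ⟩ : ∃ d : ℝ, 0 < d ∧ ENNReal.ofReal d < δ := by
    obtain ⟨x, hx, hxδ⟩ := ENNReal.lt_iff_exists_nnreal_btwn.1 hδ
    exact ⟨x, by exact_mod_cast hx, by simpa using hxδ⟩
  have vanish_step (m : ℕ) : ∀ t ∈ Icc (0:ℝ) T, T - m * d < t → r t = 0 := by
    induction m with
    | zero => exact fun t ht htT => absurd ht.2 (by simpa using htT)
    | succ m ih =>
      intro t ht htT
      have subset_Icc : Icc t T ⊆ Icc 0 T := Icc_subset_Icc_left ht.1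
      obtain ⟨x, hx, hmax⟩ := isCompact_Icc.exists_isMaxOn ⟨t, left_mem_Icc.2 ht.2⟩
        (hr.mono subset_Icc).norm
      have hle (s : ℝ) (hs : s ∈ Icc t T) : ‖r s‖ₑ ≤ ‖r x‖ₑ :=
        enorm_le_iff_norm_le.2 (hmax hs)
      have half : ‖r x‖ₑ ≤ 1/2 * ‖r x‖ₑ :=
        calc ‖r x‖ₑ ≤ ∫⁻ s in Ioc x T, k s * ‖r s‖ₑ := h x (subset_Icc hx)
          _ ≤ ∫⁻ s in Ioc x T, (Iic (T - m * d)).indicator (fun s => k s * ‖r x‖ₑ) s := by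
              refine setLIntegral_mono' measurableSet_Ioc fun s hs => ?_
              have hs' : s ∈ Icc t T := ⟨hx.1.trans hs.1.le, hs.2⟩
              by_cases hsm : s ≤ T - m * d
              · rw [indicator_of_mem (mem_Iic.2 hsm)]
                gcongr
                exact hle s hs'
              · simp [ih s (subset_Icc hs') (not_le.1 hsm)]
          _ = (∫⁻ s in Iic (T - m * d) ∩ Ioc x T, k s) * ‖r x‖ₑ := by
              rw [setLIntegral_indicator measurableSet_Iic, lintegral_mul_const' _ _ enorm_ne_top]
          _ ≤ (∫⁻ s in Ioc t (T - m * d), k s ∂(volume.restrict (Ioc 0 T))) * ‖r x‖ₑ := by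
              rw [Measure.restrict_restrict measurableSet_Ioc]
              gcongr ?_ * _
              refine lintegral_mono_set ?_
              rintro s ⟨hs, hs'⟩
              exact ⟨⟨hx.1.trans_lt hs'.1, hs⟩, (ht.1.trans hx.1).trans_lt hs'.1, hs'.2⟩
          _ ≤ 1/2 * ‖r x‖ₑ := by
              gcongr
              refine (hδk _ (((Measure.restrict_apply_le _ _).trans ?_).trans_lt hdδ)).le
              rw [Real.volume_Ioc]
              push_cast at htT
              exact ENNReal.ofReal_le_ofReal (by linarith)
      have hx0 : ‖r x‖ₑ = 0 := by
        by_contra hne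
        have := ENNReal.half_lt_self hne enorm_ne_top
        rw [ENNReal.div_eq_inv_mul, ← one_div] at this
        exact this.not_ge half
      simpa using (hle t (left_mem_Icc.2 ht.2)).trans hx0.le
  intro t ht
  obtain ⟨m, hm⟩ := exists_nat_gt ((T - t) / d)
  refine vanish_step m t ht ?_
  rw [div_lt_iff₀ hd] at hm
  linarith

/-- For an activation with `σ' > 0`, the stationarity condition `σ'(u(s)) r(s) = 0`
in `L²(Y)` for every `s ∈ [0,T]` (vanishing of the cost gradient) holds if and only
if the target is exactly reached: `f(T) = f̃` in `L²(Y)`. Here `r` solves the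
backward co-state equation with terminal value `f(T) - f̃`. -/
theorem stationarity_iff_target_reached {n : ℕ} (Y : Set (Fin n → ℝ))
    (hY : MeasurableSet Y)
    (σ : ℝ → ℝ) (hσC1 : ContDiff ℝ 1 σ) (M : ℝ) (hσ' : ∀ s, |deriv σ s| ≤ M)
    (hσ0 : σ 0 = 0) (hσ'pos : ∀ s, 0 < deriv σ s)
    (T : ℝ) (hT : 0 < T)
    (a : ℝ → (Fin n → ℝ) → ℝ) (ha_meas : Measurable (Function.uncurry a))
    (ha_int : ∫⁻ t in Ioc (0:ℝ) T, eLpNorm (a t) 2 (μY Y) < ⊤)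
    (b : ℝ → (Fin n → ℝ) → (Fin n → ℝ) → ℝ)
    (hb_meas : Measurable fun p : ℝ × ((Fin n → ℝ) × (Fin n → ℝ)) => b p.1 p.2.1 p.2.2)
    (hb_int : ∫⁻ t in Ioc (0:ℝ) T,
      eLpNorm (fun q : (Fin n → ℝ) × (Fin n → ℝ) => b t q.1 q.2) 2 ((μY Y).prod (μY Y)) < ⊤)
    (fI : Lp ℝ 2 (μY Y))
    (f F : ℝ → Lp ℝ 2 (μY Y))
    (hf_cont : ContinuousOn f (Icc 0 T))
    (hF : ∀ s ∈ Icc (0:ℝ) T,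
      ⇑(F s) =ᵐ[μY Y] fun y => σ (a s y - ∫ z, b s y z * f s z ∂(μY Y)))
    (hf : ∀ t ∈ Icc (0:ℝ) T, f t = fI + ∫ s in Ioc (0:ℝ) t, F s)
    (ftilde : Lp ℝ 2 (μY Y))
    (r R : ℝ → Lp ℝ 2 (μY Y))
    (hr_cont : ContinuousOn r (Icc 0 T))
    (hrT : r T = f T - ftilde)
    (hR : ∀ s ∈ Icc (0:ℝ) T,
      ⇑(R s) =ᵐ[μY Y] fun y =>
        ∫ z, b s z y * (deriv σ (a s z - ∫ w, b s z w * f s w ∂(μY Y)) * r s z) ∂(μY Y))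
    (hr : ∀ t ∈ Icc (0:ℝ) T, r t = r T - ∫ s in Ioc t T, R s) :
    (∀ s ∈ Icc (0:ℝ) T,
      (fun y => deriv σ (a s y - ∫ z, b s y z * f s z ∂(μY Y)) * r s y)
        =ᵐ[μY Y] 0) ↔ f T = ftilde := by
  constructor
  · intro hstat
    have hrT0 : r T = 0 := by
      rw [Lp.eq_zero_iff_ae_eq_zero]
      filter_upwards [hstat T (right_mem_Icc.2 hT.le)] with y hy
      exact (mul_eq_zero.1 hy).resolve_left (hσ'pos _).ne'
    exact sub_eq_zero.1 (hrT.symm.trans hrT0)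
  · intro hreach
    have hrT0 : r T = 0 := by rw [hrT, hreach, sub_self]
    set K : ℝ → ENNReal := fun t =>
      eLpNorm (fun q : (Fin n → ℝ) × (Fin n → ℝ) => b t q.1 q.2) 2 ((μY Y).prod (μY Y))
    have hRle (s : ℝ) (hs : s ∈ Icc 0 T) : ‖R s‖ₑ ≤ ENNReal.ofReal M * K s * ‖r s‖ₑ := by
      rw [Lp.enorm_def, Lp.enorm_def, eLpNorm_congr_ae (hR s hs)]
      refine eLpNorm_integral_kernel_mul_le (hb_meas.comp measurable_prodMk_left)
        (Lp.aestronglyMeasurable (r s)).aemeasurable ENNReal.ofReal_ne_top fun z => ?_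
      rw [enorm_mul, Real.enorm_eq_ofReal_abs (deriv σ _)]
      gcongr
      exact hσ' _
    have hr0 : ∀ t ∈ Icc (0:ℝ) T, r t = 0 := by
      refine eq_zero_of_enorm_le_lintegral_Ioc hr_cont (k := fun s => ENNReal.ofReal M * K s)
        ?_ fun t ht => ?_
      · rw [lintegral_const_mul' _ _ ENNReal.ofReal_ne_top]
        exact ENNReal.mul_ne_top ENNReal.ofReal_ne_top hb_int.ne
      · rw [hr t ht, hrT0, zero_sub, enorm_neg]
        exact (enorm_integral_le_lintegral_enorm _).trans <|
          setLIntegral_mono' measurableSet_Ioc fun s hs => hRle s ⟨ht.1.trans hs.1.le, hs.2⟩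
    intro s hs
    rw [hr0 s hs]
    filter_upwards [Lp.coeFn_zero ℝ 2 (μY Y)] with y hy
    exact mul_eq_zero_of_right _ hy
end
end
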